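/- Let R be a subring of ℝ containing ℤ, G a group, V a normed R-module, and let P_* → R be a projective resolution of the trivial R[G]-module R. Then the cochains bounded on G-orbits, Hom_R^{bG}(P_*, V), form a cochain subcomplex of Hom_R(P_*, V) (the coboundary operator dual to the boundary of P_* preserves boundedness on G-orbits), and for every n ≥ 0 the n-th cohomology of this cochain complex is naturally isomorphic to H^n(G; ℓ∞(G,V)). -/

import Mathlib

/-!
The isomorphism comes from the adjunction `Hom_Q^{bG}(W, V) ≃ Hom_{Q[G]}(W, ℓ∞(G, V))`, sending
`β` to `w ↦ (x ↦ β (x⁻¹ w))` (`homEquivBdd`). It is natural in the `Q[G]`-module `W`, so applied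
degreewise to `P_*` it identifies the orbit-bounded cochains, with coboundary `β ↦ β ∘ ∂`, with the
complex `Hom_{Q[G]}(P_*, ℓ∞(G, V))`. Since `P_*` defines a projective resolution of the trivial
representation in `Rep Q G` (`repResolution`), the cohomology of the latter complex is
`H^n(G; ℓ∞(G, V))` by `groupCohomologyIso`. The remaining lemmas translate the homology objects of
a complex in `ModuleCat` into kernels modulo images (`cohomology_of_equiv`).
-/

set_option synthInstance.maxHeartbeats 8000000
set_option maxHeartbeats 8000000

noncomputable section
open CategoryTheory groupCohomology

/-- A norm on a module `V` over a subring `Q ≤ ℝ`, in the sense of the paper. -/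
structure ModuleNorm (Q : Subring ℝ) (V : Type) [AddCommGroup V] [Module Q V] where
  nrm : V → ℝ
  nonneg : ∀ v, 0 ≤ nrm v
  eq_zero : ∀ v, nrm v = 0 → v = 0
  add_le : ∀ v w, nrm (v + w) ≤ nrm v + nrm w
  smul_le : ∀ (r : Q) (v : V), nrm (r • v) ≤ |((r : ℝ))| * nrm v

variable {Q : Subring ℝ} {V : Type} [AddCommGroup V] [Module Q V]

/-- `ℓ∞(S, V)`: the `Q`-submodule of functions `S → V` with bounded image. -/
def boundedFns (N : ModuleNorm Q V) (S : Type) : Submodule Q (S → V) where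
  carrier := {f | ∃ C : ℝ, ∀ s, N.nrm (f s) ≤ C}
  add_mem' := by
    rintro f g ⟨C, hC⟩ ⟨D, hD⟩
    exact ⟨C + D, fun s => (N.add_le _ _).trans (add_le_add (hC s) (hD s))⟩
  zero_mem' := ⟨N.nrm 0, fun _ => le_rfl⟩
  smul_mem' := by
    rintro r f ⟨C, hC⟩
    refine ⟨|(r : ℝ)| * C, fun s => (N.smul_le r (f s)).trans ?_⟩
    exact mul_le_mul_of_nonneg_left (hC s) (abs_nonneg _)

/-- Left translation as a `Q`-linear endomorphism of `ℓ∞(K,V)`. -/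
def translHom {K : Type} [Group K] (N : ModuleNorm Q V) (g : K) :
    boundedFns N K →ₗ[Q] boundedFns N K where
  toFun f := ⟨fun x => (f : K → V) (g⁻¹ * x), by
    obtain ⟨C, hC⟩ := f.2; exact ⟨C, fun s => hC _⟩⟩
  map_add' _ _ := rfl
  map_smul' _ _ := rfl

/-- The left-translation representation of `K` on `ℓ∞(K,V)`. -/
def linfRep {K : Type} [Group K] (N : ModuleNorm Q V) :
    Representation Q K (boundedFns N K) where
  toFun g := translHom N g
  map_one' := by
    refine LinearMap.ext fun f => Subtype.ext (funext fun x => ?_)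
    show (f : K → V) ((1:K)⁻¹ * x) = (f : K → V) x
    rw [inv_one, one_mul]
  map_mul' g h := by
    refine LinearMap.ext fun f => Subtype.ext (funext fun x => ?_)
    show (f : K → V) ((g * h)⁻¹ * x) = (f : K → V) (h⁻¹ * (g⁻¹ * x))
    rw [mul_inv_rev, mul_assoc]

/-- `ℓ∞(K,V)` as an object of `Rep Q K`. -/
def linfRepOf (N : ModuleNorm Q V) (K : Type) [Group K] : Rep Q K := Rep.of (linfRep N)

variable (Q) in
/-- `Hom_R^{bG}(W, V)`: the `R`-submodule of `Hom_R(W, V)` consisting of the `R`-linear maps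
`W → V` which are bounded on `G`-orbits, where `W` is an `R[G]`-module. -/
def HomBdd (G : Type) [Group G] (N : ModuleNorm Q V) (W : Type) [AddCommGroup W]
    [Module (MonoidAlgebra Q G) W] [Module Q W] : Submodule Q (W →ₗ[Q] V) where
  carrier := {β | ∀ σ : W, ∃ C : ℝ, ∀ g : G,
    N.nrm (β ((MonoidAlgebra.of Q G g) • σ)) ≤ C}
  add_mem' := by
    rintro β γ hβ hγ σ
    obtain ⟨C, hC⟩ := hβ σ
    obtain ⟨D, hD⟩ := hγ σ
    exact ⟨C + D, fun g => (N.add_le _ _).trans (add_le_add (hC g) (hD g))⟩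
  zero_mem' := fun σ => ⟨N.nrm 0, fun _ => le_rfl⟩
  smul_mem' := by
    rintro r β hβ σ
    obtain ⟨C, hC⟩ := hβ σ
    exact ⟨|(r : ℝ)| * C, fun g =>
      (N.smul_le r _).trans (mul_le_mul_of_nonneg_left (hC g) (abs_nonneg _))⟩

variable (Q) in
instance trivialAsModuleAddCommGroup (G : Type) [Group G] :
    AddCommGroup (Representation.trivial (↥Q) (G := G) (V := ↥Q)).asModule :=
  inferInstanceAs (AddCommGroup Q)

/-- The coboundary map on orbit-bounded cochains, `β ↦ β ∘ ∂`, given a proof `hbd` that it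
preserves boundedness on `G`-orbits. -/
def deltaMap {G : Type} [Group G] (N : ModuleNorm Q V) (P : ℕ → Type)
    [∀ i, AddCommGroup (P i)] [∀ i, Module (MonoidAlgebra Q G) (P i)]
    [∀ i, Module Q (P i)] [∀ i, IsScalarTower Q (MonoidAlgebra Q G) (P i)]
    (dP : ∀ i, P (i+1) →ₗ[MonoidAlgebra Q G] P i) (i : ℕ)
    (hbd : ∀ (β : P i →ₗ[Q] V), β ∈ HomBdd Q G N (P i) →
      β.comp ((dP i).restrictScalars Q) ∈ HomBdd Q G N (P (i+1))) :
    HomBdd Q G N (P i) →ₗ[Q] HomBdd Q G N (P (i+1)) where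
  toFun β := ⟨(β : P i →ₗ[Q] V).comp ((dP i).restrictScalars Q), hbd β.1 β.2⟩
  map_add' β γ := Subtype.ext (LinearMap.add_comp _ _ _)
  map_smul' r β := Subtype.ext (LinearMap.smul_comp _ _ _)

/-! ### Homology in `ModuleCat` as kernels modulo images -/

theorem exists_cycles_to_homology {R : Type} [CommRing R] (S : ShortComplex (ModuleCat.{0} R)) :
    ∃ θ : LinearMap.ker S.g.hom →ₗ[R] S.homology, Function.Surjective θ ∧
      ∀ x, θ x = 0 ↔ x.1 ∈ LinearMap.range S.f.hom := by
  refine ⟨(S.moduleCatCyclesIso.inv ≫ S.homologyπ).hom, ?_, fun x => ?_⟩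
  · exact (ModuleCat.epi_iff_surjective _).1
      (inferInstance : Epi (S.moduleCatCyclesIso.inv ≫ S.homologyπ))
  · rw [ShortComplex.moduleCatCyclesIso_inv_π]
    have h1 : Function.Injective S.moduleCatHomologyIso.inv.hom :=
      (ModuleCat.mono_iff_injective _).1 inferInstance
    have h2 : S.moduleCatLeftHomologyData.π.hom x = 0 ↔ x.1 ∈ LinearMap.range S.f.hom := by
      refine (Submodule.Quotient.mk_eq_zero _).trans ?_
      refine ⟨fun ⟨y, hy⟩ => ⟨y, congrArg Subtype.val hy⟩, fun ⟨y, hy⟩ => ⟨y, Subtype.ext hy⟩⟩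
    exact (map_eq_zero_iff _ h1).trans h2

theorem exists_cycles_to_cochainHomology {R : Type} [CommRing R]
    (K : CochainComplex (ModuleCat.{0} R) ℕ)
    (i j k : ℕ) (hi : (ComplexShape.up ℕ).prev j = i) (hk : (ComplexShape.up ℕ).next j = k) :
    ∃ θ : LinearMap.ker (K.d j k).hom →ₗ[R] K.homology j, Function.Surjective θ ∧
      ∀ x, θ x = 0 ↔ x.1 ∈ LinearMap.range (K.d i j).hom := by
  obtain ⟨θ, hs, hθ⟩ := exists_cycles_to_homology (K.sc' i j k)
  let e : (K.sc' i j k).homology ≃ₗ[R] K.homology j :=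
    (ShortComplex.homologyMapIso (K.isoSc' i j k hi hk).symm).toLinearEquiv
  refine ⟨e.toLinearMap ∘ₗ θ, e.surjective.comp hs, fun x => ?_⟩
  exact (map_eq_zero_iff e e.injective).trans (hθ x)

/-- If linear isomorphisms `e i : M i ≃ K.X i` intertwine maps `δ` with the differentials of `K`,
then the cohomology of `K` is `ker δ / im δ`. In degree `n + 1` the quotient is expressed by a
surjection from `ker δ` with kernel `im δ`. -/
theorem cohomology_of_equiv {R : Type} [CommRing R] (K : CochainComplex (ModuleCat.{0} R) ℕ)
    (M : ℕ → Type) [∀ i, AddCommGroup (M i)] [∀ i, Module R (M i)]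
    (δ : ∀ i, M i →ₗ[R] M (i + 1)) (e : ∀ i, M i ≃ₗ[R] K.X i)
    (he : ∀ i x, (K.d i (i + 1)).hom (e i x) = e (i + 1) (δ i x)) :
    Nonempty (LinearMap.ker (δ 0) ≃ₗ[R] K.homology 0) ∧
      ∀ n, ∃ θ : LinearMap.ker (δ (n + 1)) →ₗ[R] K.homology (n + 1),
        Function.Surjective θ ∧ LinearMap.ker θ =
          Submodule.comap (LinearMap.ker (δ (n + 1))).subtype (LinearMap.range (δ n)) := by
  let f (i : ℕ) : LinearMap.ker (δ i) ≃ₗ[R] LinearMap.ker (K.d i (i + 1)).hom :=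
    (e i).ofSubmodules _ _ (by
      ext y
      obtain ⟨x, rfl⟩ := (e i).surjective y
      simp [he])
  have hf (i : ℕ) (x : LinearMap.ker (δ i)) : (f i x).1 = e i x.1 := rfl
  constructor
  · obtain ⟨θ, hs, hθ⟩ := exists_cycles_to_cochainHomology K 0 0 1 (by simp) (by simp)
    refine ⟨(f 0).trans (LinearEquiv.ofBijective θ ⟨?_, hs⟩)⟩
    rw [injective_iff_map_eq_zero]
    intro x hx
    obtain ⟨y, hy⟩ := (hθ x).1 hx
    -- `d 0 0` is the differential into degree `0`, which vanishes
    rw [K.shape 0 0 (by simp)] at hy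
    exact Subtype.ext hy.symm
  · intro n
    obtain ⟨θ, hs, hθ⟩ := exists_cycles_to_cochainHomology K n (n + 1) (n + 2) (by simp) (by simp)
    refine ⟨θ ∘ₗ (f (n + 1)).toLinearMap, hs.comp (f (n + 1)).surjective, ?_⟩
    ext x
    refine (hθ (f (n + 1) x)).trans ?_
    constructor
    · rintro ⟨y, hy⟩
      obtain ⟨z, rfl⟩ := (e n).surjective y
      refine ⟨z, (e (n + 1)).injective ?_⟩
      rw [← he, hy, hf]
      rfl
    · rintro ⟨z, hz⟩
      refine ⟨e n z, ?_⟩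
      rw [he, hz, hf]
      rfl

/-! ### Projective resolutions from exact sequences -/

theorem chainComplex_of_d {C : Type*} [Category C] [Abelian C] (X : ℕ → C)
    (d : ∀ n, X (n + 1) ⟶ X n) (hd : ∀ n, d (n + 1) ≫ d n = 0) (n : ℕ) :
    (ChainComplex.of X d hd).d (n + 1) n = d n :=
  ChainComplex.of_d X d n

/-- An exact sequence `⋯ ⟶ X 1 ⟶ X 0 ⟶ Z ⟶ 0` with all `X n` projective, packaged as a
`ProjectiveResolution` of `Z`. -/
def mkResolution {C : Type*} [Category C] [Abelian C] (X : ℕ → C) (d : ∀ n, X (n + 1) ⟶ X n)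
    (Z : C) (ε : X 0 ⟶ Z) (hd : ∀ n, d (n + 1) ≫ d n = 0) (hε : d 0 ≫ ε = 0)
    (hproj : ∀ n, Projective (X n)) (hepi : Epi ε)
    (hex0 : (ShortComplex.mk _ _ hε).Exact)
    (hex : ∀ n, (ShortComplex.mk _ _ (hd n)).Exact) : ProjectiveResolution Z where
  complex := ChainComplex.of X d hd
  projective := hproj
  π := ((ChainComplex.of X d hd).toSingle₀Equiv Z).symm
    ⟨ε, (congrArg (· ≫ ε) (chainComplex_of_d X d hd 0)).trans hε⟩
  quasiIso := ⟨fun m => by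
    cases m with
    | zero =>
      rw [ChainComplex.quasiIsoAt₀_iff, ShortComplex.quasiIso_iff_of_zeros' _ rfl rfl rfl]
      have key : (((ChainComplex.of X d hd).toSingle₀Equiv Z).symm
          ⟨ε, (congrArg (· ≫ ε) (chainComplex_of_d X d hd 0)).trans hε⟩).f 0 = ε := by
        simp [ChainComplex.toSingle₀Equiv]
      constructor
      · refine (ShortComplex.exact_iff_of_iso ?_).1 hex0
        refine ShortComplex.isoMk (Iso.refl _) (Iso.refl _) (Iso.refl _) ?_ ?_
        · refine (Category.id_comp _).trans (Eq.trans ?_ (Category.comp_id _).symm)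
          exact chainComplex_of_d X d hd 0
        · refine (Category.id_comp _).trans (Eq.trans ?_ (Category.comp_id _).symm)
          exact key
      · have h : Epi ((((ChainComplex.of X d hd).toSingle₀Equiv Z).symm
            ⟨ε, (congrArg (· ≫ ε) (chainComplex_of_d X d hd 0)).trans hε⟩).f 0) := by
          rw [key]; exact hepi
        exact h
    | succ m =>
      rw [quasiIsoAt_iff_exactAt' (hL := ChainComplex.exactAt_succ_single_obj ..),
          HomologicalComplex.exactAt_iff' _ (m + 2) (m + 1) m (by simp) (by simp)]
      refine (ShortComplex.exact_iff_of_iso ?_).1 (hex m)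
      refine ShortComplex.isoMk (Iso.refl _) (Iso.refl _) (Iso.refl _) ?_ ?_
      · refine (Category.id_comp _).trans (Eq.trans ?_ (Category.comp_id _).symm)
        exact chainComplex_of_d X d hd (m + 1)
      · refine (Category.id_comp _).trans (Eq.trans ?_ (Category.comp_id _).symm)
        exact chainComplex_of_d X d hd m⟩

/-! ### `Q[G]`-modules as representations -/

variable (Q) in
/-- A `Q[G]`-module, whose given `Q`-structure is the one restricted from `Q[G]`, as an object
of `Rep Q G` with the same underlying type. -/
abbrev repP (G : Type) [Group G] (W : Type) [AddCommGroup W]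
    [Module (MonoidAlgebra Q G) W] [Module Q W] [IsScalarTower Q (MonoidAlgebra Q G) W] :
    Rep Q G := Rep.of (Representation.ofModule' (k := Q) (G := G) W)

theorem ofModule'_apply_eq {G : Type} [Group G] (W : Type) [AddCommGroup W]
    [Module (MonoidAlgebra Q G) W] [Module Q W] [IsScalarTower Q (MonoidAlgebra Q G) W]
    (g : G) (w : W) :
    Representation.ofModule' (k := Q) (G := G) W g w = MonoidAlgebra.of Q G g • w := by
  simp [Representation.ofModule']

/-- Projectivity is transported along the equivalence of `Rep Q G` with `Q[G]`-modules. -/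
theorem projective_repP (G : Type) [Group G] (W : Type) [AddCommGroup W]
    [Module (MonoidAlgebra Q G) W] [Module Q W] [IsScalarTower Q (MonoidAlgebra Q G) W]
    [Module.Projective (MonoidAlgebra Q G) W] : Projective (repP Q G W) := by
  rw [← (Rep.equivalenceModuleMonoidAlgebra (k := Q) (G := G)).map_projective_iff]
  let e : W ≃ₗ[MonoidAlgebra Q G] (Representation.ofModule' (k := Q) (G := G) W).asModule :=
    { (Representation.ofModule' (k := Q) (G := G) W).asModuleEquiv.symm.toAddEquiv with
      map_smul' := fun r x => by
        have : (Representation.ofModule' (k := Q) (G := G) W).asAlgebraHom r x = r • x := by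
          simp [Representation.asAlgebraHom, Representation.ofModule']
        exact this.symm }
  have : Module.Projective (MonoidAlgebra Q G) (ModuleCat.of (MonoidAlgebra Q G)
      (Representation.ofModule' (k := Q) (G := G) W).asModule) := Module.Projective.of_equiv e
  exact ModuleCat.projective_of_categoryTheory_projective
    (ModuleCat.of _ (Representation.ofModule' (k := Q) (G := G) W).asModule)

/-- A `Q[G]`-linear map as a morphism of representations. -/
def repPMap {G : Type} [Group G] {W W' : Type} [AddCommGroup W]
    [Module (MonoidAlgebra Q G) W] [Module Q W] [IsScalarTower Q (MonoidAlgebra Q G) W]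
    [AddCommGroup W']
    [Module (MonoidAlgebra Q G) W'] [Module Q W'] [IsScalarTower Q (MonoidAlgebra Q G) W']
    (f : W →ₗ[MonoidAlgebra Q G] W') : repP Q G W ⟶ repP Q G W' :=
  Rep.ofHom { f.restrictScalars Q with
    isIntertwining' g := by
      ext x
      simp [Representation.ofModule'] }

/-- A `Q[G]`-linear map to the trivial module as a morphism to the trivial representation. -/
def augMap {G : Type} [Group G] {W : Type} [AddCommGroup W]
    [Module (MonoidAlgebra Q G) W] [Module Q W] [IsScalarTower Q (MonoidAlgebra Q G) W]
    (f : W →ₗ[MonoidAlgebra Q G] (Representation.trivial (↥Q) (G := G) (V := ↥Q)).asModule) :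
    repP Q G W ⟶ Rep.trivial Q G Q :=
  Rep.ofHom (ρ := Representation.ofModule' (k := Q) (G := G) W)
    (σ := Representation.trivial Q G Q) {
    toFun := fun x => (Representation.trivial (↥Q) (G := G) (V := ↥Q)).asModuleEquiv (f x)
    map_add' := fun x y => by rw [map_add]; rfl
    map_smul' := fun r x => by
      rw [algebra_compatible_smul (MonoidAlgebra Q G), map_smul]
      have := (Representation.trivial (↥Q) (G := G) (V := ↥Q)).asModuleEquiv_map_smul
        (algebraMap Q _ r) (f x)
      refine this.trans ?_
      simp
    isIntertwining' g := by
      ext x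
      have h1 := ofModule'_apply_eq (Q := Q) (G := G) W g x
      have h2 := (Representation.trivial (↥Q) (G := G) (V := ↥Q)).asModuleEquiv_map_smul
        (MonoidAlgebra.of Q G g) (f x)
      rw [Representation.asAlgebraHom_of] at h2
      rw [← map_smul, ← h1] at h2
      exact congrArg Subtype.val h2 }

/-! ### Orbit-bounded maps as equivariant maps to `ℓ∞(G, V)` -/

/-- The isomorphism `Hom_Q^{bG}(W, V) ≃ Hom_{Q[G]}(W, ℓ∞(G, V))`, sending `β` to
`w ↦ (x ↦ β (x⁻¹ w))`, with inverse `φ ↦ (w ↦ φ w 1)`. Boundedness of `β` on the orbit of `w` is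
exactly boundedness of the function attached to `w`. -/
def homEquivBdd (N : ModuleNorm Q V) (G : Type) [Group G] (W : Type) [AddCommGroup W]
    [Module (MonoidAlgebra Q G) W] [Module Q W] [IsScalarTower Q (MonoidAlgebra Q G) W] :
    HomBdd Q G N W ≃ₗ[Q] (repP Q G W ⟶ linfRepOf N G) where
  toFun β := Rep.ofHom (ρ := Representation.ofModule' (k := Q) (G := G) W) (σ := linfRep N)
    { toFun := fun w => ⟨fun x => β.1 (MonoidAlgebra.of Q G x⁻¹ • w), by
        obtain ⟨C, hC⟩ := β.2 w
        exact ⟨C, fun s => hC s⁻¹⟩⟩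
      map_add' := fun x y => by ext; simp
      map_smul' := fun r x => by
        ext s
        simp only [smul_comm _ r, map_smul]
        rfl
      isIntertwining' g := by
        ext w s
        have h1 := ofModule'_apply_eq (Q := Q) (G := G) W g w
        change β.1 (MonoidAlgebra.of Q G s⁻¹ • (Representation.ofModule' (k := Q) (G := G) W g w)) =
          β.1 (MonoidAlgebra.of Q G (g⁻¹ * s)⁻¹ • w)
        rw [h1, smul_smul, ← map_mul]
        simp }
  map_add' β γ := rfl
  map_smul' r β := rfl
  invFun φ := ⟨(LinearMap.proj (1 : G) ∘ₗ (boundedFns N G).subtype) ∘ₗ φ.hom.toLinearMap,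
    fun w => by
    obtain ⟨C, hC⟩ := (φ.hom w : boundedFns N G).2
    refine ⟨C, fun g => ?_⟩
    have h1 := ofModule'_apply_eq (Q := Q) (G := G) W g w
    have h2 := Rep.hom_comm_apply φ g w
    have h3 : φ.hom (MonoidAlgebra.of Q G g • w) = linfRep N g (φ.hom w) := by
      rw [← h1]; exact h2
    have h4 := congrArg (fun f : boundedFns N G => f.1 1) h3
    change N.nrm ((φ.hom (MonoidAlgebra.of Q G g • w) : boundedFns N G).1 1) ≤ C
    rw [h4]
    exact hC _⟩
  left_inv β := by
    ext w
    change β.1 (MonoidAlgebra.of Q G 1⁻¹ • w) = β.1 w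
    rw [inv_one, map_one, one_smul]
  right_inv φ := by
    ext w x
    have h1 := ofModule'_apply_eq (Q := Q) (G := G) W x⁻¹ w
    have h2 := Rep.hom_comm_apply φ x⁻¹ w
    have h3 : φ.hom (MonoidAlgebra.of Q G x⁻¹ • w) = linfRep N x⁻¹ (φ.hom w) := by
      rw [← h1]; exact h2
    have h4 := congrArg (fun f : boundedFns N G => f.1 1) h3
    refine h4.trans ?_
    change (φ.hom w : boundedFns N G).1 (x⁻¹⁻¹ * 1) = _
    rw [inv_inv, mul_one]
    rfl

theorem repPMap_comp_homEquivBdd (N : ModuleNorm Q V) {G : Type} [Group G] {W W' : Type}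
    [AddCommGroup W] [Module (MonoidAlgebra Q G) W] [Module Q W]
    [IsScalarTower Q (MonoidAlgebra Q G) W]
    [AddCommGroup W'] [Module (MonoidAlgebra Q G) W'] [Module Q W']
    [IsScalarTower Q (MonoidAlgebra Q G) W']
    (f : W →ₗ[MonoidAlgebra Q G] W') (β : HomBdd Q G N W')
    (h : β.1.comp (f.restrictScalars Q) ∈ HomBdd Q G N W) :
    repPMap f ≫ homEquivBdd N G W' β = homEquivBdd N G W ⟨β.1.comp (f.restrictScalars Q), h⟩ := by
  ext w
  refine Subtype.ext (funext fun x => ?_)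
  change β.1 (MonoidAlgebra.of Q G x⁻¹ • f w) = β.1 (f (MonoidAlgebra.of Q G x⁻¹ • w))
  exact congrArg β.1 (f.map_smul _ w).symm

/-! ### The resolution in `Rep Q G` -/

/-- The resolution `P_* → Q` as a `ProjectiveResolution` in `Rep Q G`. -/
def repResolution {G : Type} [Group G]
    (P : ℕ → Type) [∀ i, AddCommGroup (P i)] [∀ i, Module (MonoidAlgebra Q G) (P i)]
    [∀ i, Module Q (P i)] [∀ i, IsScalarTower Q (MonoidAlgebra Q G) (P i)]
    [∀ i, Module.Projective (MonoidAlgebra Q G) (P i)]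
    (dP : ∀ i, P (i + 1) →ₗ[MonoidAlgebra Q G] P i)
    (ε : P 0 →ₗ[MonoidAlgebra Q G] (Representation.trivial (↥Q) (G := G) (V := ↥Q)).asModule)
    (hsurj : Function.Surjective ε)
    (hex0 : Function.Exact (dP 0) ε)
    (hex : ∀ i, Function.Exact (dP (i + 1)) (dP i)) :
    ProjectiveResolution (Rep.trivial Q G Q) :=
  mkResolution (fun i => repP Q G (P i)) (fun i => repPMap (dP i)) _ (augMap ε)
    (fun n => by ext x; exact (hex n).apply_apply_eq_zero x)
    (by ext x; exact congrArg Subtype.val (hex0.apply_apply_eq_zero x))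
    (fun n => projective_repP G (P n))
    ((Rep.epi_iff_surjective _).2 hsurj)
    (by
      apply (forget₂ _ (ModuleCat Q)).reflects_exact_of_faithful
      rw [ShortComplex.moduleCat_exact_iff]
      exact fun x hx => (hex0 x).1 hx)
    (fun n => by
      apply (forget₂ _ (ModuleCat Q)).reflects_exact_of_faithful
      rw [ShortComplex.moduleCat_exact_iff]
      exact fun x hx => (hex n x).1 hx)

/-- for a projective resolution `P_* → R` of the trivial `R[G]`-module `R`
(`ℤ ⊆ R ⊆ ℝ`) and a normed `R`-module `V`, the orbit-bounded cochains form a subcomplex of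
`Hom_R(P_*, V)` (the coboundary preserves boundedness on `G`-orbits), and its `n`-th
cohomology is isomorphic to `H^n(G; ℓ∞(G,V))`, for every `n ≥ 0`. -/
theorem stmt_1 (Q : Subring ℝ) (G : Type) [Group G]
    (V : Type) [AddCommGroup V] [Module Q V] (N : ModuleNorm Q V)
    -- a projective resolution `P_* → R` of the trivial `R[G]`-module `R`
    (P : ℕ → Type) [∀ i, AddCommGroup (P i)] [∀ i, Module (MonoidAlgebra Q G) (P i)]
    [∀ i, Module Q (P i)] [∀ i, IsScalarTower Q (MonoidAlgebra Q G) (P i)]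
    [∀ i, Module.Projective (MonoidAlgebra Q G) (P i)]
    (dP : ∀ i, P (i+1) →ₗ[MonoidAlgebra Q G] P i)
    (ε : P 0 →ₗ[MonoidAlgebra Q G] (Representation.trivial (↥Q) (G := G) (V := ↥Q)).asModule)
    (hsurj : Function.Surjective ε)
    (hex0 : Function.Exact (dP 0) ε)
    (hex : ∀ i, Function.Exact (dP (i+1)) (dP i)) :
    ∃ hbd : ∀ (i : ℕ) (β : P i →ₗ[Q] V), β ∈ HomBdd Q G N (P i) →
        β.comp ((dP i).restrictScalars Q) ∈ HomBdd Q G N (P (i+1)),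
      -- in degree 0, the cohomology of the orbit-bounded subcomplex is the kernel of `δ⁰`
      Nonempty ((LinearMap.ker (deltaMap N P dP 0 (hbd 0)) : Submodule Q _)
          ≃ₗ[Q] groupCohomology (linfRepOf N G) 0) ∧
      -- in degree `n+1` it is `ker δ^{n+1} / im δ^n`: there is a surjection from the
      -- `(n+1)`-cocycles onto `H^{n+1}(G; ℓ∞(G,V))` whose kernel is exactly the image of
      -- the coboundary map
      ∀ n : ℕ,
        ∃ θ : LinearMap.ker (deltaMap N P dP (n+1) (hbd (n+1)))
            →ₗ[Q] groupCohomology (linfRepOf N G) (n+1),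
          Function.Surjective θ ∧
          LinearMap.ker θ =
            Submodule.comap (LinearMap.ker (deltaMap N P dP (n+1) (hbd (n+1)))).subtype
              (LinearMap.range (deltaMap N P dP n (hbd n))) := by
  have hbd : ∀ (i : ℕ) (β : P i →ₗ[Q] V), β ∈ HomBdd Q G N (P i) →
      β.comp ((dP i).restrictScalars Q) ∈ HomBdd Q G N (P (i+1)) := by
    intro i β hβ σ
    obtain ⟨C, hC⟩ := hβ (dP i σ)
    refine ⟨C, fun g => ?_⟩
    have := hC g
    rwa [← map_smul] at this
  refine ⟨hbd, ?_⟩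
  let res := repResolution P dP ε hsurj hex0 hex
  let K := res.complex.linearYonedaObj Q (linfRepOf N G)
  have hK := cohomology_of_equiv K (fun i => HomBdd Q G N (P i))
    (fun i => deltaMap N P dP i (hbd i)) (fun i => homEquivBdd N G (P i)) (fun i β => by
      have hd : res.complex.d (i + 1) i = repPMap (dP i) :=
        ChainComplex.of_d (fun i => repP Q G (P i)) (fun i => repPMap (dP i)) i
      change res.complex.d (i + 1) i ≫ homEquivBdd N G (P i) β = _
      rw [hd]
      exact repPMap_comp_homEquivBdd N (dP i) β (hbd i β.1 β.2))
  let c (n : ℕ) : K.homology n ≃ₗ[Q] groupCohomology (linfRepOf N G) n :=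
    (groupCohomologyIso (linfRepOf N G) n res).symm.toLinearEquiv
  obtain ⟨⟨f⟩, h⟩ := hK
  refine ⟨⟨f.trans (c 0)⟩, fun n => ?_⟩
  obtain ⟨θ, hs, hθ⟩ := h n
  refine ⟨(c (n + 1)).toLinearMap ∘ₗ θ, (c (n + 1)).surjective.comp hs, ?_⟩
  rw [LinearEquiv.ker_comp, hθ]
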